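/- Let χ be a real measurable function with χ(t) = 1 for 0 ≤ t ≤ 1 and 0 ≤ χ(t) ≤ 1 for t > 1, and suppose χ(t) = ((1+ε(t))/h(t))^t for some function ε(t) → 0 as t → ∞, where h satisfies: (i) h is positive and nondecreasing with h(u) → ∞ as u → ∞; (ii) h is continuously differentiable and u·h'(u)/h(u) → n as u → ∞ for some 0 ≤ n < ∞. Let σ be the unique solution of u·σ(u) = ∫₀^u σ(u−t)·χ(t) dt for u > 1 with σ(u) = 1 for 0 ≤ u ≤ 1. Set ζ = e/n if n > 0 and ζ = 1 if n = 0. Then σ(u)^{1/u} · h(ζ·log(u)) → 1 as u → ∞. -/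

import Mathlib

/-!
Inserting `exp(-s u)` into the delay equation compares the truncated moment `∫₀ᵘ χ(t) exp(s t) dt`
with `u`, and by a maximum principle for the equation `exp(-s u)` is, up to a constant factor, an
upper or a lower bound for `σ` according to which of the two is larger. Hence `-log σ(u) / u` is
close to the value of `s` at which the moment equals `u`.

The exponent of the integrand is about `t (s - log h(t))`. For `s = log h(y)`, regular variation
turns it into `n t log(y / t)`, which is maximal at `t = y / e`, with value `n y / e`. Equating this
value to `log u` gives `y = ζ log u`. If `n = 0` the maximum is `o(y)`, and every positive multiple
of `log u` is an equally good choice of `y`.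
-/

section

open MeasureTheory Set Filter Topology Real

section Gronwall

variable {T K : ℝ}

theorem eq_zero_of_le_mul_integral_of_continuous {F : ℝ → ℝ} (hF : Continuous F)
    (hF0 : ∀ x ∈ Icc 0 T, 0 ≤ F x) (hle : ∀ x ∈ Icc 0 T, F x ≤ K * ∫ r in (0 : ℝ)..x, F r) :
    ∀ x ∈ Icc 0 T, F x = 0 := by
  have primitive_eq_zero : ∀ x ∈ Icc 0 T, ∫ r in (0 : ℝ)..x, F r = 0 := by
    refine eq_zero_of_abs_deriv_le_mul_abs_self_of_eq_zero_right (f' := F) (K := K)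
      (intervalIntegral.continuous_primitive (fun a b => hF.intervalIntegrable a b) 0).continuousOn
      (fun x _ => (hF.integral_hasStrictDerivAt 0 x).hasDerivAt.hasDerivWithinAt)
      intervalIntegral.integral_same fun x hx => ?_
    have hx' : x ∈ Icc 0 T := Ico_subset_Icc_self hx
    rw [norm_of_nonneg (hF0 x hx'), norm_of_nonneg]
    · exact hle x hx'
    · exact intervalIntegral.integral_nonneg hx.1 fun r hr => hF0 r ⟨hr.1, hr.2.trans hx'.2⟩
  intro x hx
  refine le_antisymm ?_ (hF0 x hx)
  simpa only [primitive_eq_zero x hx, mul_zero] using hle x hx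

theorem eq_zero_of_le_mul_integral {w : ℝ → ℝ} (hw : ∀ v, 0 ≤ w v)
    (hint : IntervalIntegrable w volume 0 T)
    (hle : ∀ v ∈ Icc 0 T, w v ≤ K * ∫ r in (0 : ℝ)..v, w r) : ∀ v ∈ Icc 0 T, w v = 0 := by
  rcases lt_or_ge T 0 with hT | hT
  · exact fun v hv => absurd (hv.1.trans hv.2) hT.not_ge
  have hi : Integrable ((Ioc 0 T).indicator w) :=
    (integrable_indicator_iff measurableSet_Ioc).2
      ((intervalIntegrable_iff_integrableOn_Ioc_of_le hT).1 hint)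
  set F : ℝ → ℝ := fun x => ∫ r in (0 : ℝ)..x, (Ioc 0 T).indicator w r
  have hF : Continuous F := hi.continuous_primitive 0
  have hF0 : ∀ x ∈ Icc 0 T, 0 ≤ F x := fun x hx =>
    intervalIntegral.integral_nonneg hx.1 fun r _ => indicator_nonneg (fun y _ => hw y) r
  have hFw : ∀ x ∈ Icc 0 T, F x = ∫ r in (0 : ℝ)..x, w r := by
    refine fun x hx => intervalIntegral.integral_congr_ae (Eventually.of_forall fun r hr => ?_)
    rw [uIoc_of_le hx.1] at hr
    exact indicator_of_mem (s := Ioc 0 T) ⟨hr.1, hr.2.trans hx.2⟩ w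
  have hFle : ∀ x ∈ Icc 0 T, F x ≤ K * ∫ r in (0 : ℝ)..x, F r := by
    intro x hx
    rw [← intervalIntegral.integral_const_mul]
    refine intervalIntegral.integral_mono_on hx.1 hi.intervalIntegrable
      ((hF.const_mul K).intervalIntegrable _ _) fun r hr => ?_
    have hr' : r ∈ Icc 0 T := ⟨hr.1, hr.2.trans hx.2⟩
    rw [hFw r hr']
    exact (indicator_le_self' (fun y _ => hw y) r).trans (hle r hr')
  intro v hv
  refine le_antisymm ?_ (hw v)
  simpa only [← hFw v hv, eq_zero_of_le_mul_integral_of_continuous hF hF0 hFle v hv, mul_zero]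
    using hle v hv

end Gronwall

theorem intervalIntegrable_of_subinterval {f : ℝ → ℝ} {a b c d : ℝ}
    (hf : IntervalIntegrable f volume a d) (hab : a ≤ b) (hbc : b ≤ c) (hcd : c ≤ d) :
    IntervalIntegrable f volume b c :=
  hf.mono_set (uIcc_subset_uIcc (mem_uIcc_of_le hab (hbc.trans hcd))
    (mem_uIcc_of_le (hab.trans hbc) hcd))

theorem intervalIntegrable_csSup {f : ℝ → ℝ} {A : Set ℝ} {a M : ℝ} (hA : A.Nonempty)
    (hbdd : BddAbove A) (ha : ∀ u ∈ A, a ≤ u) (hf : ∀ u ∈ A, IntervalIntegrable f volume a u)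
    (hM : ∀ u ∈ A, ∫ r in a..u, |f r| ≤ M) : IntervalIntegrable f volume a (sSup A) := by
  obtain ⟨u, -, hu, huA⟩ := exists_seq_tendsto_sSup hA hbdd
  have haA : a ≤ sSup A := (ha _ (huA 0)).trans (le_csSup hbdd (huA 0))
  rw [intervalIntegrable_iff_integrableOn_Ioc_of_le haA]
  refine integrableOn_Ioc_of_intervalIntegral_norm_bounded_right (I := M)
    (fun i => ?_) hu (Eventually.of_forall fun i => ?_)
  · exact (intervalIntegrable_iff_integrableOn_Ioc_of_le (ha _ (huA i))).1 (hf _ (huA i))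
  · simpa only [intervalIntegral.integral_of_le (ha _ (huA i)), norm_eq_abs] using hM _ (huA i)

theorem intervalIntegrable_max_zero {f : ℝ → ℝ} {a b : ℝ} (hf : IntervalIntegrable f volume a b) :
    IntervalIntegrable (fun r => max (f r) 0) volume a b :=
  ⟨hf.1.pos_part, hf.2.pos_part⟩

/-- The kernels of the delay equation `u σ(u) = ∫₀ᵘ σ(u - t) χ(t) dt`. -/
structure IsDelayKernel (χ : ℝ → ℝ) : Prop where
  measurable : Measurable χ
  eq_one : ∀ t, 0 ≤ t → t ≤ 1 → χ t = 1
  mem_Icc : ∀ t, 1 < t → 0 ≤ χ t ∧ χ t ≤ 1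

/-- The exponential moment `∫₀ᵛ χ(t) exp(s t) dt` of the kernel `χ` truncated at `v`. It decides on
which side of a solution `exp(-s u)` lies: compare it with `v`. -/
noncomputable def expMoment (χ : ℝ → ℝ) (s v : ℝ) : ℝ :=
  ∫ t in (0 : ℝ)..v, χ t * exp (s * t)

theorem integral_mul_exp_neg_mul_comp_sub (χ : ℝ → ℝ) (B s v : ℝ) :
    ∫ r in (0 : ℝ)..v, B * exp (-(s * r)) * χ (v - r) =
      B * exp (-(s * v)) * expMoment χ s v := by
  have hsubst := intervalIntegral.integral_comp_sub_left (a := 0) (b := v)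
    (fun t => χ t * exp (s * t)) v
  rw [sub_self, sub_zero] at hsubst
  rw [expMoment, ← hsubst, ← intervalIntegral.integral_const_mul]
  refine intervalIntegral.integral_congr fun r _ => ?_
  have hexp : exp (-(s * r)) = exp (-(s * v)) * exp (s * (v - r)) := by
    rw [← exp_add]
    ring_nf
  simp only [hexp]
  ring

namespace IsDelayKernel

variable {χ : ℝ → ℝ}

theorem nonneg (K : IsDelayKernel χ) {t : ℝ} (ht : 0 ≤ t) : 0 ≤ χ t :=
  (le_or_gt t 1).elim (fun h1 => (K.eq_one t ht h1).symm ▸ zero_le_one) fun h1 => (K.mem_Icc t h1).1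

theorem le_one (K : IsDelayKernel χ) {t : ℝ} (ht : 0 ≤ t) : χ t ≤ 1 :=
  (le_or_gt t 1).elim (fun h1 => (K.eq_one t ht h1).le) fun h1 => (K.mem_Icc t h1).2

theorem intervalIntegrable_mul_comp_sub (K : IsDelayKernel χ) {f : ℝ → ℝ} {v : ℝ} (hv : 0 ≤ v)
    (hf : IntervalIntegrable f volume 0 v) :
    IntervalIntegrable (fun r => f r * χ (v - r)) volume 0 v := by
  rw [intervalIntegrable_iff_integrableOn_Ioc_of_le hv] at hf ⊢
  refine Integrable.mul_bdd (c := 1) hf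
    (K.measurable.comp (measurable_const.sub measurable_id)).aestronglyMeasurable ?_
  refine (ae_restrict_mem measurableSet_Ioc).mono fun r hr => ?_
  have hvr : 0 ≤ v - r := sub_nonneg.2 hr.2
  rw [norm_of_nonneg (K.nonneg hvr)]
  exact K.le_one hvr

theorem intervalIntegrable_mul_exp (K : IsDelayKernel χ) (s : ℝ) {v : ℝ} (hv : 0 ≤ v) :
    IntervalIntegrable (fun t => χ t * exp (s * t)) volume 0 v := by
  have hcomp := K.intervalIntegrable_mul_comp_sub (f := fun _ => 1) hv intervalIntegrable_const
  have hχ := (hcomp.comp_sub_left v).symm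
  simp only [one_mul, sub_sub_cancel, sub_self, sub_zero] at hχ
  exact hχ.mul_continuousOn (by fun_prop)

theorem integral_mul_comp_sub_le (K : IsDelayKernel χ) {f : ℝ → ℝ} {v : ℝ} (hv : 0 ≤ v)
    (hf : IntervalIntegrable f volume 0 v) :
    ∫ r in (0 : ℝ)..v, f r * χ (v - r) ≤ ∫ r in (0 : ℝ)..v, max (f r) 0 := by
  refine intervalIntegral.integral_mono_on hv (K.intervalIntegrable_mul_comp_sub hv hf)
    (intervalIntegrable_max_zero hf) fun r hr => ?_
  have hvr : 0 ≤ v - r := sub_nonneg.2 hr.2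
  calc f r * χ (v - r) ≤ max (f r) 0 * χ (v - r) :=
        mul_le_mul_of_nonneg_right (le_max_left _ _) (K.nonneg hvr)
    _ ≤ max (f r) 0 := mul_le_of_le_one_right (le_max_right _ _) (K.le_one hvr)

theorem nonpos_of_subsolution (K : IsDelayKernel χ) {f : ℝ → ℝ} {T : ℝ}
    (hf : IntervalIntegrable f volume 0 T)
    (H : ∀ v ∈ Icc 0 T, f v ≤ 0 ∨ 1 < v ∧ v * f v ≤ ∫ r in (0 : ℝ)..v, f r * χ (v - r)) :
    ∀ v ∈ Icc 0 T, f v ≤ 0 := by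
  suffices hmax : ∀ v ∈ Icc 0 T, max (f v) 0 = 0 from fun v hv => max_eq_right_iff.1 (hmax v hv)
  refine eq_zero_of_le_mul_integral (K := 1) (fun v => le_max_right _ _)
    (intervalIntegrable_max_zero hf) fun v hv => ?_
  have hnonneg : 0 ≤ ∫ r in (0 : ℝ)..v, max (f r) 0 :=
    intervalIntegral.integral_nonneg hv.1 fun r _ => le_max_right _ _
  rw [one_mul]
  refine max_le ?_ hnonneg
  rcases le_or_gt (f v) 0 with hfv | hfv
  · exact hfv.trans hnonneg
  obtain ⟨hv1, hsub⟩ := (H v hv).resolve_left hfv.not_ge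
  calc f v ≤ v * f v := le_mul_of_one_le_left hfv.le hv1.le
    _ ≤ _ := hsub.trans (K.integral_mul_comp_sub_le hv.1
        (intervalIntegrable_of_subinterval hf le_rfl hv.1 hv.2))

theorem expMoment_zero_le (K : IsDelayKernel χ) {v : ℝ} (hv : 0 ≤ v) : expMoment χ 0 v ≤ v := by
  calc expMoment χ 0 v ≤ ∫ _ in (0 : ℝ)..v, (1 : ℝ) :=
        intervalIntegral.integral_mono_on hv (K.intervalIntegrable_mul_exp 0 hv)
          intervalIntegrable_const fun t ht => by simpa using K.le_one ht.1
    _ = v := by simp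

theorem le_expMoment (K : IsDelayKernel χ) {a b c s v : ℝ} (ha : 0 ≤ a) (hab : a ≤ b) (hbv : b ≤ v)
    (hs : 0 ≤ s) (hc : 0 ≤ c) (hχ : ∀ t ∈ Icc a b, c ≤ χ t) :
    (b - a) * (c * exp (s * a)) ≤ expMoment χ s v := by
  have hi := K.intervalIntegrable_mul_exp s (ha.trans (hab.trans hbv))
  calc (b - a) * (c * exp (s * a)) = ∫ _ in a..b, c * exp (s * a) := by
        rw [intervalIntegral.integral_const, smul_eq_mul]
    _ ≤ ∫ t in a..b, χ t * exp (s * t) := by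
        refine intervalIntegral.integral_mono_on hab intervalIntegrable_const
          (intervalIntegrable_of_subinterval hi ha hab hbv) fun t ht => ?_
        exact mul_le_mul (hχ t ht) (exp_le_exp.2 (mul_le_mul_of_nonneg_left ht.1 hs))
          (exp_pos _).le (hc.trans (hχ t ht))
    _ ≤ expMoment χ s v := by
        refine intervalIntegral.integral_mono_interval ha hab hbv ?_ hi
        refine (ae_restrict_mem measurableSet_Ioc).mono fun t ht => ?_
        exact mul_nonneg (K.nonneg ht.1.le) (exp_pos _).le

theorem expMoment_le (K : IsDelayKernel χ) {C s d v : ℝ} (hd : 0 < d) (hC : 0 ≤ C) (hv : 0 ≤ v)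
    (hχ : ∀ t, 0 ≤ t → χ t ≤ C * exp (-((s + d) * t))) : expMoment χ s v ≤ C / d := by
  have hderiv : ∀ t ∈ uIcc 0 v, HasDerivAt (fun t => -(C / d) * exp (-(d * t)))
      (C * exp (-(d * t))) t := fun t _ => by
    refine ((hasDerivAt_const_mul d).neg.exp.const_mul (-(C / d))).congr_deriv ?_
    simp only [Pi.neg_apply]
    field_simp
  have hcont : Continuous fun t => C * exp (-(d * t)) := by fun_prop
  calc expMoment χ s v ≤ ∫ t in (0 : ℝ)..v, C * exp (-(d * t)) := by
        refine intervalIntegral.integral_mono_on hv (K.intervalIntegrable_mul_exp s hv)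
          (hcont.intervalIntegrable _ _) fun t ht => ?_
        calc χ t * exp (s * t) ≤ C * exp (-((s + d) * t)) * exp (s * t) := by
              gcongr
              exact hχ t ht.1
          _ = C * exp (-(d * t)) := by
              rw [mul_assoc, ← exp_add]
              ring_nf
    _ = C / d - C / d * exp (-(d * v)) := by
        rw [intervalIntegral.integral_eq_sub_of_hasDerivAt hderiv (hcont.intervalIntegrable _ _)]
        simp only [mul_zero, neg_zero, exp_zero]
        ring
    _ ≤ C / d := sub_le_self _ (by positivity)

theorem le_add_exp_mul_exp_neg (K : IsDelayKernel χ) {T M r : ℝ} (hr : 0 ≤ r)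
    (hχ : ∀ t, T ≤ t → χ t ≤ exp (M - r * t)) {t : ℝ} (ht : 0 ≤ t) :
    χ t ≤ (exp (r * T) + exp M) * exp (-(r * t)) := by
  rw [add_mul, ← exp_add, ← exp_add, ← sub_eq_add_neg, ← sub_eq_add_neg]
  rcases le_total t T with htT | hTt
  · refine (K.le_one ht).trans (le_add_of_le_of_nonneg (one_le_exp ?_) (exp_pos _).le)
    exact sub_nonneg.2 (mul_le_mul_of_nonneg_left htT hr)
  · exact le_add_of_nonneg_of_le (exp_pos _).le (hχ t hTt)

end IsDelayKernel

/-- `σ` solves the delay equation with kernel `χ` and initial datum `1` on `[0, 1]`. No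
measurability of `σ` is assumed, so a priori the integral may take the value `0` because `σ` is
not integrable; `IsDelaySolution.intervalIntegrable` excludes this. -/
structure IsDelaySolution (χ σ : ℝ → ℝ) : Prop where
  isDelayKernel : IsDelayKernel χ
  eq_one : ∀ u, 0 ≤ u → u ≤ 1 → σ u = 1
  mul_eq : ∀ u, 1 < u → u * σ u = ∫ t in (0 : ℝ)..u, σ (u - t) * χ t

namespace IsDelaySolution

variable {χ σ : ℝ → ℝ}

theorem mul_eq_integral_comp_sub (S : IsDelaySolution χ σ) {v : ℝ} (hv : 1 < v) :
    v * σ v = ∫ r in (0 : ℝ)..v, σ r * χ (v - r) := by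
  rw [S.mul_eq v hv]
  simpa using intervalIntegral.integral_comp_sub_left (a := 0) (b := v)
    (fun r => σ r * χ (v - r)) v

theorem eq_zero_of_not_intervalIntegrable (S : IsDelaySolution χ σ) {v : ℝ} (hv : 1 < v)
    (hprev : IntervalIntegrable σ volume 0 (v - 1)) (hnot : ¬ IntervalIntegrable σ volume 0 v) :
    σ v = 0 := by
  have hundef : ¬ IntervalIntegrable (fun r => σ r * χ (v - r)) volume 0 v := by
    refine fun hi => hnot (hprev.trans ?_)
    refine (intervalIntegrable_of_subinterval hi (sub_nonneg.2 hv.le) (sub_le_self _ zero_le_one)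
      le_rfl).congr fun r hr => ?_
    rw [uIoc_of_le (by linarith)] at hr
    rw [S.isDelayKernel.eq_one (v - r) (by linarith [hr.2]) (by linarith [hr.1]), mul_one]
  have hmul := S.mul_eq_integral_comp_sub hv
  rw [intervalIntegral.integral_undef hundef] at hmul
  exact (mul_eq_zero.1 hmul).resolve_left (by linarith)

theorem abs_le_integral_abs (S : IsDelaySolution χ σ) {v : ℝ} (hv : 1 < v)
    (hi : IntervalIntegrable σ volume 0 v) : |σ v| ≤ ∫ r in (0 : ℝ)..v, |σ r| := by
  have hv0 : 0 ≤ v := by linarith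
  calc |σ v| ≤ v * |σ v| := le_mul_of_one_le_left (abs_nonneg _) hv.le
    _ = ‖∫ r in (0 : ℝ)..v, σ r * χ (v - r)‖ := by
        rw [← S.mul_eq_integral_comp_sub hv, norm_mul, norm_of_nonneg hv0, norm_eq_abs]
    _ ≤ ∫ r in (0 : ℝ)..v, |σ r| := by
        refine intervalIntegral.norm_integral_le_of_norm_le hv0
          (Eventually.of_forall fun r hr => ?_) hi.abs
        have hvr : 0 ≤ v - r := sub_nonneg.2 hr.2
        rw [norm_mul, norm_of_nonneg (S.isDelayKernel.nonneg hvr)]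
        exact mul_le_of_le_one_right (norm_nonneg _) (S.isDelayKernel.le_one hvr)

theorem integral_abs_le_integral_abs (S : IsDelaySolution χ σ) {a u : ℝ} (ha : 1 ≤ a) (hau : a ≤ u)
    (hua : u ≤ a + 1 / 2) (hi : IntervalIntegrable σ volume 0 u) :
    ∫ r in a..u, |σ r| ≤ ∫ r in (0 : ℝ)..a, |σ r| := by
  have ha0 : 0 ≤ a := by linarith
  set M := ∫ r in (0 : ℝ)..u, |σ r|
  have hM : 0 ≤ M := intervalIntegral.integral_nonneg (ha0.trans hau) fun r _ => abs_nonneg _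
  have hsplit : (∫ r in (0 : ℝ)..a, |σ r|) + ∫ r in a..u, |σ r| = M :=
    intervalIntegral.integral_add_adjacent_intervals
      (intervalIntegrable_of_subinterval hi le_rfl ha0 hau).abs
      (intervalIntegrable_of_subinterval hi ha0 hau le_rfl).abs
  have hbound : ∀ v ∈ uIoc a u, ‖|σ v|‖ ≤ M := by
    intro v hv
    rw [uIoc_of_le hau] at hv
    have hv0 : 0 ≤ v := ha0.trans hv.1.le
    rw [norm_eq_abs, abs_abs]
    exact (S.abs_le_integral_abs (ha.trans_lt hv.1)
      (intervalIntegrable_of_subinterval hi le_rfl hv0 hv.2)).trans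
      (intervalIntegral.integral_mono_interval le_rfl hv0 hv.2
        (Eventually.of_forall fun r => abs_nonneg _) hi.abs)
  have hshort := (le_abs_self _).trans (intervalIntegral.norm_integral_le_of_norm_le_const hbound)
  rw [abs_of_nonneg (sub_nonneg.2 hau)] at hshort
  nlinarith

theorem intervalIntegrable_add_half (S : IsDelaySolution χ σ) {a : ℝ} (ha : 1 ≤ a)
    (hi : IntervalIntegrable σ volume 0 a) : IntervalIntegrable σ volume 0 (a + 1 / 2) := by
  have ha0 : 0 ≤ a := by linarith
  set A : Set ℝ := {u | a ≤ u ∧ u ≤ a + 1 / 2 ∧ IntervalIntegrable σ volume 0 u}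
  have haA : a ∈ A := ⟨le_rfl, by linarith, hi⟩
  have hbdd : BddAbove A := ⟨a + 1 / 2, fun u hu => hu.2.1⟩
  have hsup : IntervalIntegrable σ volume a (sSup A) :=
    intervalIntegrable_csSup ⟨a, haA⟩ hbdd (fun u hu => hu.1)
      (fun u hu => intervalIntegrable_of_subinterval hu.2.2 ha0 hu.1 le_rfl)
      fun u hu => S.integral_abs_le_integral_abs ha hu.1 hu.2.1 hu.2.2
  have heq_zero : ∀ v, sSup A < v → v ≤ a + 1 / 2 → σ v = 0 := by
    intro v hv hva
    have hav : a ≤ v := (le_csSup hbdd haA).trans hv.le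
    refine S.eq_zero_of_not_intervalIntegrable ((ha.trans (le_csSup hbdd haA)).trans_lt hv)
      (intervalIntegrable_of_subinterval hi le_rfl (by linarith) (by linarith)) fun hiv => ?_
    exact hv.not_ge (le_csSup hbdd ⟨hav, hva, hiv⟩)
  refine (hi.trans hsup).trans ((intervalIntegrable_const (c := (0 : ℝ))).congr fun v hv => ?_)
  rw [uIoc_of_le (csSup_le ⟨a, haA⟩ fun u hu => hu.2.1)] at hv
  exact (heq_zero v hv.1 hv.2).symm

theorem intervalIntegrable (S : IsDelaySolution χ σ) {u : ℝ} (hu : 0 ≤ u) :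
    IntervalIntegrable σ volume 0 u := by
  have half_integer_endpoint : ∀ k : ℕ, IntervalIntegrable σ volume 0 (1 + k * (1 / 2)) := by
    intro k
    induction k with
    | zero =>
      refine (intervalIntegrable_const (c := (1 : ℝ))).congr fun v hv => ?_
      rw [CharP.cast_eq_zero, zero_mul, add_zero, uIoc_of_le zero_le_one] at hv
      exact (S.eq_one v hv.1.le hv.2).symm
    | succ k ih =>
      convert S.intervalIntegrable_add_half (le_add_of_nonneg_right (by positivity)) ih using 1
      push_cast
      ring
  obtain ⟨k, hk⟩ := exists_nat_gt (2 * u)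
  exact intervalIntegrable_of_subinterval (half_integer_endpoint k) le_rfl hu (by linarith)

theorem le_of_supersolution (S : IsDelaySolution χ σ) {g : ℝ → ℝ} {T : ℝ}
    (hg : IntervalIntegrable g volume 0 T)
    (H : ∀ v ∈ Icc 0 T, σ v ≤ g v ∨ 1 < v ∧ ∫ r in (0 : ℝ)..v, g r * χ (v - r) ≤ v * g v) :
    ∀ v ∈ Icc 0 T, σ v ≤ g v := by
  intro v hv
  have hT := hv.1.trans hv.2
  refine sub_nonpos.1 (S.isDelayKernel.nonpos_of_subsolution (f := fun r => σ r - g r)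
    ((S.intervalIntegrable hT).sub hg) (fun r hr => ?_) v hv)
  refine (H r hr).imp sub_nonpos.2 fun ⟨hr1, hsup⟩ => ⟨hr1, ?_⟩
  simp only [sub_mul]
  rw [intervalIntegral.integral_sub, ← S.mul_eq_integral_comp_sub hr1]
  · linarith [hsup]
  · exact S.isDelayKernel.intervalIntegrable_mul_comp_sub hr.1 (S.intervalIntegrable hr.1)
  · exact S.isDelayKernel.intervalIntegrable_mul_comp_sub hr.1
      (intervalIntegrable_of_subinterval hg le_rfl hr.1 hr.2)

theorem ge_of_subsolution (S : IsDelaySolution χ σ) {g : ℝ → ℝ} {T : ℝ}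
    (hg : IntervalIntegrable g volume 0 T)
    (H : ∀ v ∈ Icc 0 T, g v ≤ σ v ∨ 1 < v ∧ v * g v ≤ ∫ r in (0 : ℝ)..v, g r * χ (v - r)) :
    ∀ v ∈ Icc 0 T, g v ≤ σ v := by
  intro v hv
  have hT := hv.1.trans hv.2
  refine sub_nonpos.1 (S.isDelayKernel.nonpos_of_subsolution (f := fun r => g r - σ r)
    (hg.sub (S.intervalIntegrable hT)) (fun r hr => ?_) v hv)
  refine (H r hr).imp sub_nonpos.2 fun ⟨hr1, hsub⟩ => ⟨hr1, ?_⟩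
  simp only [sub_mul]
  rw [intervalIntegral.integral_sub, ← S.mul_eq_integral_comp_sub hr1]
  · linarith [hsub]
  · exact S.isDelayKernel.intervalIntegrable_mul_comp_sub hr.1
      (intervalIntegrable_of_subinterval hg le_rfl hr.1 hr.2)
  · exact S.isDelayKernel.intervalIntegrable_mul_comp_sub hr.1 (S.intervalIntegrable hr.1)

theorem nonneg (S : IsDelaySolution χ σ) {u : ℝ} (hu : 0 ≤ u) : 0 ≤ σ u := by
  refine S.ge_of_subsolution (g := fun _ => 0) (T := u) intervalIntegrable_const
    (fun v hv => ?_) u ⟨hu, le_rfl⟩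
  rcases le_or_gt v 1 with hv1 | hv1
  · exact Or.inl ((S.eq_one v hv.1 hv1).symm ▸ zero_le_one)
  · exact Or.inr ⟨hv1, by simp⟩

theorem le_mul_exp_neg (S : IsDelaySolution χ σ) {T s B : ℝ} (hB : 0 ≤ B)
    (H : ∀ v ∈ Icc 0 T, σ v ≤ B * exp (-(s * v)) ∨ 1 < v ∧ expMoment χ s v ≤ v) :
    ∀ v ∈ Icc 0 T, σ v ≤ B * exp (-(s * v)) := by
  refine S.le_of_supersolution (Continuous.intervalIntegrable (by fun_prop) _ _) fun v hv =>
    (H v hv).imp_right fun ⟨hv1, hmoment⟩ => ⟨hv1, ?_⟩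
  rw [integral_mul_exp_neg_mul_comp_sub, mul_comm v]
  gcongr

theorem mul_exp_neg_le (S : IsDelaySolution χ σ) {T s B : ℝ} (hB : 0 ≤ B)
    (H : ∀ v ∈ Icc 0 T, B * exp (-(s * v)) ≤ σ v ∨ 1 < v ∧ v ≤ expMoment χ s v) :
    ∀ v ∈ Icc 0 T, B * exp (-(s * v)) ≤ σ v := by
  refine S.ge_of_subsolution (Continuous.intervalIntegrable (by fun_prop) _ _) fun v hv =>
    (H v hv).imp_right fun ⟨hv1, hmoment⟩ => ⟨hv1, ?_⟩
  rw [integral_mul_exp_neg_mul_comp_sub, mul_comm v]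
  gcongr

theorem le_one (S : IsDelaySolution χ σ) {u : ℝ} (hu : 0 ≤ u) : σ u ≤ 1 := by
  have hle := S.le_mul_exp_neg (T := u) (s := 0) zero_le_one (fun v hv => ?_) u ⟨hu, le_rfl⟩
  · simpa using hle
  rcases le_or_gt v 1 with hv1 | hv1
  · left
    simp [S.eq_one v hv.1 hv1]
  · exact Or.inr ⟨hv1, S.isDelayKernel.expMoment_zero_le hv.1⟩

theorem exp_neg_four_mul_sq_le (S : IsDelaySolution χ σ) {T v : ℝ} (hv : v ∈ Icc 0 T) :
    exp (-(4 * T ^ 2)) ≤ σ v := by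
  have hT : 0 ≤ T := hv.1.trans hv.2
  have hle := S.mul_exp_neg_le (T := T) (s := 4 * T) (B := 1) zero_le_one (fun r hr => ?_) v hv
  · refine le_trans ?_ hle
    rw [one_mul, exp_le_exp, neg_le_neg_iff]
    nlinarith [hv.2]
  rcases le_or_gt r 1 with hr1 | hr1
  · left
    rw [S.eq_one r hr.1 hr1, one_mul, exp_le_one_iff, neg_nonpos]
    exact mul_nonneg (by positivity) hr.1
  · refine Or.inr ⟨hr1, ?_⟩
    have hmoment : (1 - 1 / 2) * (1 * exp (4 * T * (1 / 2))) ≤ expMoment χ (4 * T) r :=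
      S.isDelayKernel.le_expMoment (by norm_num) (by norm_num) hr1.le (by positivity) zero_le_one
        fun t ht => (S.isDelayKernel.eq_one t (by linarith [ht.1]) ht.2).ge
    linarith [add_one_le_exp (4 * T * (1 / 2)), hr.2]

theorem exp_neg_le_of_exp_neg_le_kernel (S : IsDelaySolution χ σ) {b q u : ℝ} (hb : 1 < b)
    (hq : 0 ≤ q) (hu : 1 ≤ u) (hχ : ∀ t ∈ Icc (b - 1) b, exp (-q) ≤ χ t) :
    exp (-(4 * b ^ 2 + u * ((log u + q) / (b - 1)))) ≤ σ u := by
  have hb1 : 0 < b - 1 := sub_pos.2 hb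
  set s := (log u + q) / (b - 1)
  have hs : 0 ≤ s := div_nonneg (add_nonneg (log_nonneg hu) hq) hb1.le
  have hsb : s * (b - 1) = log u + q := div_mul_cancel₀ _ hb1.ne'
  have hle := S.mul_exp_neg_le (T := u) (s := s) (exp_pos (-(4 * b ^ 2))).le (fun v hv => ?_) u
    ⟨by linarith, le_rfl⟩
  · rwa [← exp_add, ← neg_add, mul_comm s] at hle
  rcases le_or_gt v b with hvb | hvb
  · left
    refine le_trans ?_ (S.exp_neg_four_mul_sq_le ⟨hv.1, hvb⟩)
    exact mul_le_of_le_one_right (exp_pos _).le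
      (exp_le_one_iff.2 (neg_nonpos.2 (mul_nonneg hs hv.1)))
  · refine Or.inr ⟨hb.trans hvb, hv.2.trans ?_⟩
    calc u = (b - (b - 1)) * (exp (-q) * exp (s * (b - 1))) := by
          rw [hsb, ← exp_add, neg_add_eq_sub, add_sub_cancel_right, exp_log (by linarith)]
          ring
      _ ≤ expMoment χ s v := S.isDelayKernel.le_expMoment hb1.le (sub_le_self _ zero_le_one) hvb.le
          hs (exp_pos _).le hχ

theorem le_exp_of_kernel_le (S : IsDelaySolution χ σ) {C s d : ℝ} (hs : 0 ≤ s) (hd : 0 < d)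
    (hC : 0 ≤ C) (hχ : ∀ t, 0 ≤ t → χ t ≤ C * exp (-((s + d) * t))) {u : ℝ} (hu : 0 ≤ u) :
    σ u ≤ exp (s * (C / d + 1) - s * u) := by
  rw [sub_eq_add_neg, exp_add]
  refine S.le_mul_exp_neg (exp_pos _).le (fun v hv => ?_) u ⟨hu, le_rfl⟩
  rcases le_or_gt v (C / d + 1) with hvC | hvC
  · left
    rw [← exp_add]
    refine (S.le_one hv.1).trans (one_le_exp ?_)
    linarith [mul_le_mul_of_nonneg_left hvC hs]
  · have hCd : 0 ≤ C / d := by positivity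
    exact Or.inr ⟨by linarith, (S.isDelayKernel.expMoment_le hd hC hv.1 hχ).trans (by linarith)⟩

end IsDelaySolution

/-- Regular growth of index `n`: `h` is nondecreasing near infinity, tends to infinity and is
regularly varying of index `n` in Karamata's sense, `h(a x) / h(x) → a ^ n` for every `a > 0`. -/
structure IsRegularGrowth (h : ℝ → ℝ) (n : ℝ) : Prop where
  monotoneOn : ∃ T, MonotoneOn h (Ici T)
  tendsto_atTop : Tendsto h atTop atTop
  tendsto_comp_mul_div : ∀ a, 0 < a → Tendsto (fun x => h (a * x) / h x) atTop (𝓝 (a ^ n))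

namespace IsRegularGrowth

variable {h : ℝ → ℝ} {n : ℝ}

theorem tendsto_log_atTop (R : IsRegularGrowth h n) :
    Tendsto (fun x => log (h x)) atTop atTop :=
  Real.tendsto_log_atTop.comp R.tendsto_atTop

theorem exists_log_monotoneOn (R : IsRegularGrowth h n) :
    ∃ T, 0 < T ∧ MonotoneOn (fun x => log (h x)) (Ici T) := by
  obtain ⟨T₁, hmono⟩ := R.monotoneOn
  obtain ⟨T₂, hpos⟩ := eventually_atTop.1 (R.tendsto_atTop.eventually_gt_atTop 0)
  refine ⟨max 1 (max T₁ T₂), by positivity, fun x hx y hy hxy => ?_⟩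
  simp only [mem_Ici, max_le_iff] at hx hy
  exact log_le_log (hpos x hx.2.2) (hmono hx.2.1 hy.2.1 hxy)

theorem index_nonneg (R : IsRegularGrowth h n) : 0 ≤ n := by
  obtain ⟨T, hmono⟩ := R.monotoneOn
  have hone_le : (1 : ℝ) ≤ 2 ^ n := by
    refine ge_of_tendsto (R.tendsto_comp_mul_div 2 two_pos) ?_
    filter_upwards [eventually_ge_atTop T, eventually_ge_atTop 0,
      R.tendsto_atTop.eventually_gt_atTop 0] with x hxT hx0 hhx
    have hx2 : x ≤ 2 * x := by linarith
    exact (one_le_div hhx).2 (hmono hxT (hxT.trans hx2) hx2)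
  by_contra! hn
  exact hone_le.not_gt (rpow_lt_one_of_one_lt_of_neg one_lt_two hn)

theorem tendsto_log_comp_mul_sub (R : IsRegularGrowth h n) {a b : ℝ} (ha : 0 < a) (hb : 0 < b) :
    Tendsto (fun x => log (h (a * x)) - log (h (b * x))) atTop (𝓝 (n * log (a / b))) := by
  have hab : 0 < a / b := div_pos ha hb
  have hbx : Tendsto (fun x : ℝ => b * x) atTop atTop := tendsto_id.const_mul_atTop hb
  have hlog := ((R.tendsto_comp_mul_div _ hab).comp hbx).log (rpow_pos_of_pos hab n).ne'
  rw [log_rpow hab] at hlog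
  refine hlog.congr' ?_
  filter_upwards [(R.tendsto_atTop.comp hbx).eventually_gt_atTop 0,
    (R.tendsto_atTop.comp (tendsto_id.const_mul_atTop ha)).eventually_gt_atTop 0] with x hxb hxa
  simp only [Function.comp_apply, id_eq] at hxb hxa ⊢
  rw [← mul_assoc, div_mul_cancel₀ _ hb.ne', log_div hxa.ne' hxb.ne']

theorem exists_log_comp_exp_mul_sub_le (R : IsRegularGrowth h n) {l ε : ℝ} (hl : 0 ≤ l)
    (hε : n * l < ε) :
    ∃ T, 0 < T ∧ ∀ x, T ≤ x → ∀ k : ℕ, log (h (exp (k * l) * x)) - log (h x) ≤ k * ε := by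
  have hlim := R.tendsto_log_comp_mul_sub (exp_pos l) one_pos
  simp only [one_mul, div_one, log_exp] at hlim
  obtain ⟨T, hstep⟩ := eventually_atTop.1 (hlim.eventually_le_const hε)
  refine ⟨max T 1, by positivity, fun x hx k => ?_⟩
  have hx0 : 0 ≤ x := zero_le_one.trans ((le_max_right _ _).trans hx)
  induction k with
  | zero => simp
  | succ k ih =>
    have hk := hstep (exp (k * l) * x) (((le_max_left _ _).trans hx).trans
      (le_mul_of_one_le_left hx0 (one_le_exp (by positivity))))
    rw [← mul_assoc, ← exp_add] at hk
    push_cast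
    rw [add_one_mul, add_comm (k * l), add_one_mul]
    linarith

/-- One half of Potter's bounds. Monotonicity reduces it to the points `x exp(k ε / N)`, along
which the increments of `log h` are eventually at most `ε`. -/
theorem exists_log_sub_le (R : IsRegularGrowth h n) {N ε : ℝ} (hN : n < N) (hε : 0 < ε) :
    ∃ T, 0 < T ∧ ∀ x y, T ≤ x → x ≤ y →
      log (h y) - log (h x) ≤ N * log (y / x) + ε := by
  have hN0 : 0 < N := R.index_nonneg.trans_lt hN
  set l := ε / N with hl
  have hl0 : 0 < l := by positivity
  have hnl : n * l < ε := by
    calc n * l < N * l := by gcongr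
      _ = ε := mul_div_cancel₀ ε hN0.ne'
  obtain ⟨T₁, hT₁, hgeom⟩ := R.exists_log_comp_exp_mul_sub_le hl0.le hnl
  obtain ⟨T₂, -, hmono⟩ := R.exists_log_monotoneOn
  refine ⟨max T₁ T₂, lt_max_of_lt_left hT₁, fun x y hx hxy => ?_⟩
  have hxT₁ : T₁ ≤ x := (le_max_left _ _).trans hx
  have hyT₂ : T₂ ≤ y := ((le_max_right _ _).trans hx).trans hxy
  have hx0 : 0 < x := hT₁.trans_le hxT₁
  have hlog : 0 ≤ log (y / x) := log_nonneg ((one_le_div hx0).2 hxy)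
  set k := ⌈log (y / x) / l⌉₊
  have hyk : y ≤ exp (k * l) * x := by
    rw [← div_le_iff₀ hx0, ← log_le_iff_le_exp (div_pos (hx0.trans_le hxy) hx0),
      ← div_le_iff₀ hl0]
    exact Nat.le_ceil _
  have hk : k * ε ≤ N * log (y / x) + ε := by
    calc k * ε ≤ (log (y / x) / l + 1) * ε := by
          gcongr
          exact (Nat.ceil_lt_add_one (by positivity)).le
      _ = N * log (y / x) + ε := by
          rw [hl]
          field_simp
  linarith [hgeom x hxT₁ k, hmono hyT₂ (hyT₂.trans hyk) hyk]

theorem tendsto_log_div_id (R : IsRegularGrowth h n) :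
    Tendsto (fun x => log (h x) / x) atTop (𝓝 0) := by
  obtain ⟨T, hT, hpotter⟩ := R.exists_log_sub_le (lt_add_one n) one_pos
  have hupper : Tendsto (fun x : ℝ => (log (h T) - (n + 1) * log T + 1) / x +
      (n + 1) * (log x / x)) atTop (𝓝 0) := by
    have hlog : Tendsto (fun x : ℝ => log x / x) atTop (𝓝 0) :=
      isLittleO_log_id_atTop.tendsto_div_nhds_zero
    simpa using (tendsto_const_nhds.div_atTop tendsto_id).add (hlog.const_mul (n + 1))
  refine tendsto_of_tendsto_of_tendsto_of_le_of_le' tendsto_const_nhds hupper ?_ ?_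
  · filter_upwards [R.tendsto_log_atTop.eventually_ge_atTop 0, eventually_ge_atTop 0] with x hx hx0
    exact div_nonneg hx hx0
  · filter_upwards [eventually_ge_atTop T] with x hx
    have hx0 : 0 < x := hT.trans_le hx
    have hpotter_x := hpotter T x le_rfl hx
    rw [log_div hx0.ne' hT.ne'] at hpotter_x
    rw [← mul_div_assoc, ← add_div]
    gcongr
    linarith

theorem tendsto_log_comp_mul_div (R : IsRegularGrowth h n) {a : ℝ} (ha : 0 < a) :
    Tendsto (fun x => log (h (a * x)) / x) atTop (𝓝 0) := by
  have hlim := (R.tendsto_log_div_id.comp (tendsto_id.const_mul_atTop ha)).const_mul a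
  rw [mul_zero] at hlim
  refine hlim.congr fun x => ?_
  simp only [Function.comp_apply, id_eq]
  field_simp

end IsRegularGrowth

theorem hasDerivAt_log_comp_exp {h : ℝ → ℝ} {t : ℝ} (hpos : 0 < h (exp t))
    (hdiff : DifferentiableAt ℝ h (exp t)) :
    HasDerivAt (fun t => log (h (exp t))) (exp t * deriv h (exp t) / h (exp t)) t := by
  refine ((hdiff.hasDerivAt.comp t (hasDerivAt_exp t)).log hpos.ne').congr_deriv ?_
  simp only [Function.comp_apply, mul_comm]

theorem tendsto_comp_mul_div_of_tendsto_mul_deriv_div {h : ℝ → ℝ} {n : ℝ}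
    (hpos : ∀ᶠ x in atTop, 0 < h x) (hdiff : ∀ᶠ x in atTop, DifferentiableAt ℝ h x)
    (hlim : Tendsto (fun x => x * deriv h x / h x) atTop (𝓝 n)) {a : ℝ} (ha : 0 < a) :
    Tendsto (fun x => h (a * x) / h x) atTop (𝓝 (a ^ n)) := by
  have hax : Tendsto (fun x : ℝ => a * x) atTop atTop := tendsto_id.const_mul_atTop ha
  suffices hlog : Tendsto (fun x => log (h (a * x)) - log (h x)) atTop (𝓝 (log a * n)) by
    rw [rpow_def_of_pos ha]
    refine ((continuous_exp.tendsto _).comp hlog).congr' ?_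
    filter_upwards [hpos, hax.eventually hpos] with x hx hxa
    rw [Function.comp_apply, exp_sub, exp_log hx, exp_log hxa]
  refine Metric.tendsto_nhds.2 fun ε hε => ?_
  set η := ε / (|log a| + 1)
  have hη : 0 < η := by positivity
  obtain ⟨T, hT⟩ := eventually_atTop.1 ((tendsto_exp_atTop.eventually (hpos.and hdiff)).and
    ((hlim.comp tendsto_exp_atTop).eventually (Metric.closedBall_mem_nhds n hη)))
  have hderiv : ∀ t ∈ Ici T, HasDerivWithinAt (fun t => log (h (exp t)) - n * t)
      (exp t * deriv h (exp t) / h (exp t) - n) (Ici T) t := fun t ht =>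
    ((hasDerivAt_log_comp_exp (hT t ht).1.1 (hT t ht).1.2).sub
      (hasDerivAt_const_mul n)).hasDerivWithinAt
  filter_upwards [Real.tendsto_log_atTop.eventually_ge_atTop T,
    (Real.tendsto_log_atTop.comp hax).eventually_ge_atTop T, eventually_gt_atTop 0]
    with x hx hxa hx0
  rw [Function.comp_apply] at hxa
  have hmv := (convex_Ici T).norm_image_sub_le_of_norm_hasDerivWithin_le hderiv
    (fun t ht => (dist_eq_norm _ n).symm.trans_le (hT t ht).2) hx hxa
  rw [exp_log hx0, exp_log (mul_pos ha hx0), log_mul ha.ne' hx0.ne', add_sub_cancel_right,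
    norm_eq_abs, norm_eq_abs] at hmv
  rw [dist_eq]
  calc |log (h (a * x)) - log (h x) - log a * n| ≤ η * |log a| := by
        convert hmv using 2
        ring
    _ < η * (|log a| + 1) := by
        gcongr
        exact lt_add_one _
    _ = ε := div_mul_cancel₀ _ (by positivity)

theorem exp_neg_mul_log_sub_rpow_one_div {b c t : ℝ} (hb : 0 < b) (ht : 0 < t) :
    exp (-(t * (log b - c))) ^ (1 / t) = exp c / b := by
  have hexponent : -(t * (log b - c)) * (1 / t) = c - log b := by
    field_simp
    ring
  rw [← exp_mul, hexponent, exp_sub, exp_log hb]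

theorem exp_neg_mul_log_add_le_iff {a b c t : ℝ} (ha : 0 ≤ a) (hb : 0 < b) (ht : 0 < t) :
    exp (-(t * (log b + c))) ≤ a ↔ exp (-c) ≤ a ^ (1 / t) * b := by
  rw [← rpow_le_rpow_iff (exp_pos _).le ha (one_div_pos.2 ht), ← sub_neg_eq_add,
    exp_neg_mul_log_sub_rpow_one_div hb ht, div_le_iff₀ hb]

theorem le_exp_neg_mul_log_sub_iff {a b c t : ℝ} (ha : 0 ≤ a) (hb : 0 < b) (ht : 0 < t) :
    a ≤ exp (-(t * (log b - c))) ↔ a ^ (1 / t) * b ≤ exp c := by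
  rw [← rpow_le_rpow_iff ha (exp_pos _).le (one_div_pos.2 ht),
    exp_neg_mul_log_sub_rpow_one_div hb ht, le_div_iff₀ hb]

theorem tendsto_nhds_one_iff_exp {α : Type*} {l : Filter α} {f : α → ℝ} :
    Tendsto f l (𝓝 1) ↔ ∀ δ, 0 < δ → ∀ᶠ t in l, exp (-δ) ≤ f t ∧ f t ≤ exp δ := by
  constructor
  · exact fun hlim δ hδ => hlim.eventually
      (Icc_mem_nhds (exp_lt_one_iff.2 (neg_lt_zero.2 hδ)) (one_lt_exp_iff.2 hδ))
  · intro H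
    have htendsto_exp : Tendsto exp (𝓝 0) (𝓝 1) := by
      simpa using continuous_exp.tendsto 0
    refine tendsto_order.2 ⟨fun c hc => ?_, fun c hc => ?_⟩
    · have hneg : Tendsto (fun δ : ℝ => exp (-δ)) (𝓝[>] 0) (𝓝 1) :=
        tendsto_nhdsWithin_of_tendsto_nhds (htendsto_exp.comp (by simpa using tendsto_neg (0 : ℝ)))
      obtain ⟨δ, hδ, hcδ⟩ := (eventually_mem_nhdsWithin.and (hneg.eventually_const_lt hc)).exists
      exact (H δ hδ).mono fun t ht => hcδ.trans_le ht.1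
    · obtain ⟨δ, hδ, hcδ⟩ := (eventually_mem_nhdsWithin.and ((tendsto_nhdsWithin_of_tendsto_nhds
        htendsto_exp : Tendsto exp (𝓝[>] 0) (𝓝 1)).eventually_lt_const hc)).exists
      exact (H δ hδ).mono fun t ht => ht.2.trans_lt hcδ

theorem tendsto_rpow_mul_nhds_one_iff {f g : ℝ → ℝ} (hf : ∀ᶠ t in atTop, 0 ≤ f t)
    (hg : ∀ᶠ t in atTop, 0 < g t) :
    Tendsto (fun t => f t ^ (1 / t) * g t) atTop (𝓝 1) ↔
      ∀ δ, 0 < δ → ∀ᶠ t in atTop, exp (-(t * (log (g t) + δ))) ≤ f t ∧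
        f t ≤ exp (-(t * (log (g t) - δ))) := by
  refine tendsto_nhds_one_iff_exp.trans (forall₂_congr fun δ _ => eventually_congr ?_)
  filter_upwards [hf, hg, eventually_gt_atTop 0] with t hft hgt ht
  rw [exp_neg_mul_log_add_le_iff hft hgt ht, le_exp_neg_mul_log_sub_iff hft hgt ht]

theorem tendsto_exp_mul_sub_mul_nhds_zero {g : ℝ → ℝ} (hg : Tendsto (fun x => g x / x) atTop (𝓝 0))
    (c : ℝ) {κ : ℝ} (hκ : 0 < κ) : Tendsto (fun x => exp (c * g x - κ * x)) atTop (𝓝 0) := by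
  have hlim : Tendsto (fun x => (κ - c * (g x / x)) * x) atTop atTop := by
    refine Tendsto.pos_mul_atTop hκ ?_ tendsto_id
    simpa using (hg.const_mul c).const_sub κ
  refine tendsto_exp_atBot.comp ((tendsto_neg_atTop_atBot.comp hlim).congr' ?_)
  filter_upwards [eventually_ne_atTop 0] with x hx
  simp only [Function.comp_apply]
  field_simp
  ring

theorem eventually_mul_exp_add_exp_le {g : ℝ → ℝ} (hg : Tendsto (fun x => g x / x) atTop (𝓝 0))
    (T : ℝ) {θ d : ℝ} (hθ : θ < 1) (hd : 0 < d) :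
    ∀ᶠ x in atTop, g x * ((exp (g x * T) + exp (θ * x)) / d + 1) ≤ d * exp x := by
  have hlim := (((tendsto_exp_mul_sub_mul_nhds_zero hg (T + 1) one_pos).add
    (tendsto_exp_mul_sub_mul_nhds_zero hg 1 (sub_pos.2 hθ))).div_const d).add
    (tendsto_exp_mul_sub_mul_nhds_zero hg 1 one_pos)
  simp only [add_zero, zero_div] at hlim
  filter_upwards [hlim.eventually_le_const hd] with x hx
  calc g x * ((exp (g x * T) + exp (θ * x)) / d + 1)
      ≤ exp (g x) * ((exp (g x * T) + exp (θ * x)) / d + 1) := by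
        gcongr
        linarith [add_one_le_exp (g x)]
    _ = ((exp ((T + 1) * g x - 1 * x) + exp (1 * g x - (1 - θ) * x)) / d +
          exp (1 * g x - 1 * x)) * exp x := by
        have hT : (T + 1) * g x - 1 * x = g x + g x * T - x := by ring
        have hθx : 1 * g x - (1 - θ) * x = g x + θ * x - x := by ring
        rw [hT, hθx, one_mul, one_mul, exp_sub, exp_sub, exp_sub, exp_add, exp_add]
        field_simp
    _ ≤ d * exp x := by gcongr

theorem tendsto_mul_div_sub_one_sub_self {g : ℝ → ℝ}
    (hg : Tendsto (fun x => g x / x) atTop (𝓝 0)) :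
    Tendsto (fun x => x * g x / (x - 1) - g x) atTop (𝓝 0) := by
  have hinv : Tendsto (fun x : ℝ => 1 + (x - 1)⁻¹) atTop (𝓝 1) := by
    simpa [← sub_eq_add_neg] using (tendsto_inv_atTop_zero.comp
      (tendsto_atTop_add_const_right _ (-1) tendsto_id)).const_add (1 : ℝ)
  have hmul := hg.mul hinv
  rw [zero_mul] at hmul
  refine hmul.congr' ?_
  filter_upwards [eventually_gt_atTop 1] with x hx
  have hx0 : x ≠ 0 := by linarith
  have hx1 : x - 1 ≠ 0 := by linarith
  field_simp
  ring

theorem mul_log_div_sub_le {N t y : ℝ} (hN : 0 < N) (ht : 0 < t) (hy : 0 < y) (d : ℝ) :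
    t * (N * log (y / t) - d) ≤ y * (N * exp (-1 - d / N)) := by
  have hlog := log_le_sub_one_of_pos (mul_pos (exp_pos (-1 - d / N)) (div_pos hy ht))
  rw [log_mul (exp_pos _).ne' (div_pos hy ht).ne', log_exp] at hlog
  calc t * (N * log (y / t) - d) = N * t * (log (y / t) - d / N) := by field_simp
    _ ≤ N * t * (exp (-1 - d / N) * (y / t)) := by
        gcongr
        linarith
    _ = y * (N * exp (-1 - d / N)) := by field_simp

section ExtremalScale

variable {n ζ : ℝ}

theorem exists_one_div_add_mul_log_lt (hn : 0 ≤ n) (hnζ : 0 < n → ζ = exp 1 / n) {ε : ℝ}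
    (hε : 0 < ε) : ∃ A, 0 < A ∧ 1 / A + n * log (A / ζ) < ε := by
  rcases hn.eq_or_lt with rfl | hn
  · exact ⟨2 / ε, by positivity, by simpa using hε⟩
  · refine ⟨1 / n, by positivity, ?_⟩
    have hlog : log (1 / n / ζ) = -1 := by
      rw [hnζ hn, ← log_exp (-1), exp_neg]
      field_simp
    rwa [hlog, one_div_one_div, mul_neg_one, add_neg_cancel]

theorem exists_lt_mul_mul_exp_lt_one (hn : 0 ≤ n) (hζ : 0 < ζ) (hnζ : 0 < n → ζ = exp 1 / n)
    {d : ℝ} (hd : 0 < d) : ∃ N, n < N ∧ ζ * (N * exp (-1 - d / N)) < 1 := by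
  rcases hn.eq_or_lt with rfl | hn
  · refine ⟨1 / ζ, by positivity, ?_⟩
    rw [← mul_assoc, mul_one_div_cancel hζ.ne', one_mul, exp_lt_one_iff]
    have hpos : 0 < d / (1 / ζ) := by positivity
    linarith
  · have hcont : ContinuousAt (fun N => ζ * (N * exp (-1 - d / N))) n := by
      fun_prop (disch := exact hn.ne')
    have hlt : ζ * (n * exp (-1 - d / n)) < 1 := by
      calc ζ * (n * exp (-1 - d / n)) = exp (-(d / n)) := by
            rw [hnζ hn, ← mul_assoc, div_mul_cancel₀ _ hn.ne', ← exp_add]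
            ring_nf
        _ < 1 := exp_lt_one_iff.2 (neg_lt_zero.2 (by positivity))
    have hright : ∀ᶠ N in 𝓝[>] n, ζ * (N * exp (-1 - d / N)) < 1 :=
      (hcont.mono_left nhdsWithin_le_nhds).eventually_lt_const hlt
    exact (eventually_mem_nhdsWithin.and hright).exists

end ExtremalScale

namespace IsRegularGrowth

variable {h : ℝ → ℝ} {n ζ : ℝ}

theorem tendsto_add_mul_log_div_sub (R : IsRegularGrowth h n) {A : ℝ} (hA : 0 < A) (hζ : 0 < ζ)
    (δ : ℝ) :
    Tendsto (fun x => (x + A * x * (log (h (A * x)) + δ)) / (A * x - 1) - log (h (ζ * x)))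
      atTop (𝓝 (1 / A + δ + n * log (A / ζ))) := by
  have hg : Tendsto (fun y => (1 / A + δ + log (h y)) / y) atTop (𝓝 0) := by
    have hconst : Tendsto (fun y : ℝ => (1 / A + δ) / y) atTop (𝓝 0) :=
      tendsto_const_nhds.div_atTop tendsto_id
    simpa only [← add_div, add_zero] using hconst.add R.tendsto_log_div_id
  have hlim := ((tendsto_mul_div_sub_one_sub_self hg).comp
    (tendsto_id.const_mul_atTop hA)).add
      ((R.tendsto_log_comp_mul_sub hA hζ).const_add (1 / A + δ))
  rw [zero_add] at hlim
  refine hlim.congr fun x => ?_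
  have hx : A * x * (1 / A + δ + log (h (A * x))) = x + A * x * (log (h (A * x)) + δ) := by
    field_simp
    ring
  simp only [Function.comp_apply, id_eq, hx]
  ring

theorem eventually_exp_neg_le_kernel (R : IsRegularGrowth h n) {χ : ℝ → ℝ} {δ : ℝ}
    (hχ : ∀ᶠ t in atTop, exp (-(t * (log (h t) + δ))) ≤ χ t) :
    ∀ᶠ b in atTop, ∀ t ∈ Icc (b - 1) b, exp (-(b * (log (h b) + δ))) ≤ χ t := by
  obtain ⟨T₁, hT₁, hmono⟩ := R.exists_log_monotoneOn
  obtain ⟨T₂, hT₂⟩ := eventually_atTop.1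
    (hχ.and (R.tendsto_log_atTop.eventually_ge_atTop (-δ)))
  filter_upwards [eventually_ge_atTop (T₁ + 1), eventually_ge_atTop (T₂ + 1)] with b hb₁ hb₂ t ht
  have htT₁ : T₁ ≤ t := by linarith [ht.1]
  have htT₂ : T₂ ≤ t := by linarith [ht.1]
  refine le_trans ?_ (hT₂ t htT₂).1
  have hlog : log (h t) ≤ log (h b) := hmono htT₁ (htT₁.trans ht.2) ht.2
  have hpos : 0 ≤ log (h t) + δ := by linarith [(hT₂ t htT₂).2]
  have ht0 : 0 ≤ t := hT₁.le.trans htT₁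
  exact exp_le_exp.2 (neg_le_neg (mul_le_mul ht.2 (by linarith) hpos (ht0.trans ht.2)))

/-- The point `t = ζ x / e` maximises the left-hand side up to lower-order terms; the gain `d`
leaves room for the constant `θ < 1`. -/
theorem exists_mul_log_sub_le (R : IsRegularGrowth h n) (hζ : 0 < ζ)
    (hnζ : 0 < n → ζ = exp 1 / n) {d : ℝ} (hd : 0 < d) :
    ∃ T θ, 0 < T ∧ θ < 1 ∧ ∀ᶠ x in atTop, ∀ t, T ≤ t →
      t * (log (h (ζ * x)) - d - log (h t)) ≤ θ * x := by
  obtain ⟨N, hnN, hN⟩ := exists_lt_mul_mul_exp_lt_one R.index_nonneg hζ hnζ (half_pos hd)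
  have hN0 : 0 < N := R.index_nonneg.trans_lt hnN
  obtain ⟨T₁, hT₁, hpotter⟩ := R.exists_log_sub_le hnN (half_pos hd)
  obtain ⟨T₂, -, hmono⟩ := R.exists_log_monotoneOn
  refine ⟨T₁, ζ * (N * exp (-1 - d / 2 / N)), hT₁, hN, ?_⟩
  filter_upwards [(tendsto_id.const_mul_atTop hζ).eventually_ge_atTop T₂, eventually_gt_atTop 0]
    with x hxT₂ hx t ht
  have ht0 : 0 < t := hT₁.trans_le ht
  rcases le_total (ζ * x) t with hle | hle
  · have hlog : log (h (ζ * x)) ≤ log (h t) := hmono hxT₂ (le_trans hxT₂ hle) hle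
    calc t * (log (h (ζ * x)) - d - log (h t)) ≤ 0 :=
          mul_nonpos_of_nonneg_of_nonpos ht0.le (by linarith)
      _ ≤ ζ * (N * exp (-1 - d / 2 / N)) * x := by positivity
  · calc t * (log (h (ζ * x)) - d - log (h t)) ≤ t * (N * log (ζ * x / t) - d / 2) := by
          refine mul_le_mul_of_nonneg_left ?_ ht0.le
          linarith [hpotter t (ζ * x) ht hle]
      _ ≤ ζ * x * (N * exp (-1 - d / 2 / N)) :=
          mul_log_div_sub_le hN0 ht0 (by positivity) _
      _ = ζ * (N * exp (-1 - d / 2 / N)) * x := by ring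

end IsRegularGrowth

namespace IsDelaySolution

variable {χ σ h : ℝ → ℝ} {n ζ : ℝ}

theorem eventually_exp_neg_le_of_add_lt (S : IsDelaySolution χ σ) (R : IsRegularGrowth h n)
    {A δ ε : ℝ} (hχ : ∀ᶠ t in atTop, exp (-(t * (log (h t) + δ))) ≤ χ t) (hA : 0 < A)
    (hζ : 0 < ζ) (hε : 1 / A + δ + n * log (A / ζ) < ε) :
    ∀ᶠ x in atTop, exp (-(exp x * (log (h (ζ * x)) + ε))) ≤ σ (exp x) := by
  have hAx : Tendsto (fun x : ℝ => A * x) atTop atTop := tendsto_id.const_mul_atTop hA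
  have hlim : Tendsto (fun x => 4 * A ^ 2 * (x ^ 2 * exp (-x)) +
      ((x + A * x * (log (h (A * x)) + δ)) / (A * x - 1) - log (h (ζ * x))))
      atTop (𝓝 (1 / A + δ + n * log (A / ζ))) := by
    simpa using ((tendsto_pow_mul_exp_neg_atTop_nhds_zero 2).const_mul (4 * A ^ 2)).add
      (R.tendsto_add_mul_log_div_sub hA hζ δ)
  filter_upwards [hlim.eventually_le_const hε, eventually_ge_atTop 0, hAx.eventually_gt_atTop 1,
    (R.tendsto_log_atTop.comp hAx).eventually_ge_atTop (-δ),
    hAx.eventually (R.eventually_exp_neg_le_kernel hχ)] with x hx hx0 hb hδ hker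
  have hq : 0 ≤ A * x * (log (h (A * x)) + δ) :=
    mul_nonneg (by positivity) (neg_le_iff_add_nonneg.1 hδ)
  have hbound := S.exp_neg_le_of_exp_neg_le_kernel hb hq (one_le_exp hx0) hker
  rw [log_exp] at hbound
  refine le_trans (exp_le_exp.2 (neg_le_neg ?_)) hbound
  calc 4 * (A * x) ^ 2 + exp x * ((x + A * x * (log (h (A * x)) + δ)) / (A * x - 1))
      = exp x * (log (h (ζ * x)) + (4 * A ^ 2 * (x ^ 2 * exp (-x)) +
          ((x + A * x * (log (h (A * x)) + δ)) / (A * x - 1) - log (h (ζ * x))))) := by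
        rw [exp_neg]
        field_simp
        ring
    _ ≤ exp x * (log (h (ζ * x)) + ε) := by gcongr

theorem eventually_exp_neg_le (S : IsDelaySolution χ σ) (R : IsRegularGrowth h n) (hζ : 0 < ζ)
    (hnζ : 0 < n → ζ = exp 1 / n)
    (hχ : ∀ δ, 0 < δ → ∀ᶠ t in atTop, exp (-(t * (log (h t) + δ))) ≤ χ t) {δ : ℝ} (hδ : 0 < δ) :
    ∀ᶠ u in atTop, exp (-(u * (log (h (ζ * log u)) + δ))) ≤ σ u := by
  obtain ⟨A, hA, hlt⟩ := exists_one_div_add_mul_log_lt R.index_nonneg hnζ (half_pos hδ)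
  have hev := S.eventually_exp_neg_le_of_add_lt R (hχ _ (half_pos hδ)) (ε := δ) hA hζ (by linarith)
  filter_upwards [Real.tendsto_log_atTop.eventually hev, eventually_gt_atTop 0] with u hu hu0
  rwa [exp_log hu0] at hu

theorem eventually_le_exp_neg_of_kernel_le (S : IsDelaySolution χ σ) (R : IsRegularGrowth h n)
    (hζ : 0 < ζ) (hnζ : 0 < n → ζ = exp 1 / n) {d : ℝ} (hd : 0 < d)
    (hχ : ∀ᶠ t in atTop, χ t ≤ exp (-(t * (log (h t) - d)))) :
    ∀ᶠ x in atTop, σ (exp x) ≤ exp (-(exp x * (log (h (ζ * x)) - 4 * d))) := by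
  obtain ⟨T₁, θ, hT₁, hθ, hmax⟩ := R.exists_mul_log_sub_le hζ hnζ hd
  obtain ⟨T₂, hT₂⟩ := eventually_atTop.1 hχ
  set T := max T₁ T₂
  have hT : 0 < T := lt_max_of_lt_left hT₁
  filter_upwards [hmax, eventually_mul_exp_add_exp_le (R.tendsto_log_comp_mul_div hζ) T hθ hd,
    (R.tendsto_log_atTop.comp (tendsto_id.const_mul_atTop hζ)).eventually_ge_atTop (3 * d)]
    with x hx herror hlog
  simp only [Function.comp_apply, id_eq] at hlog
  obtain ⟨s, hs⟩ : ∃ s, log (h (ζ * x)) = s + 3 * d := ⟨_, (sub_add_cancel _ _).symm⟩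
  rw [hs] at hx herror hlog ⊢
  have hs0 : 0 ≤ s := by linarith
  have hker : ∀ t, T ≤ t → χ t ≤ exp (θ * x - (s + d) * t) := by
    refine fun t ht => (hT₂ t ((le_max_right _ _).trans ht)).trans (exp_le_exp.2 ?_)
    linarith [hx t ((le_max_left _ _).trans ht)]
  have hσ := S.le_exp_of_kernel_le hs0 hd (by positivity)
    (fun t ht => S.isDelayKernel.le_add_exp_mul_exp_neg (by positivity) hker ht) (exp_pos x).le
  refine hσ.trans (exp_le_exp.2 ?_)
  have hCs : s * ((exp ((s + d) * T) + exp (θ * x)) / d + 1) ≤ d * exp x := by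
    refine le_trans ?_ herror
    gcongr <;> linarith [hT]
  linarith

theorem eventually_le_exp_neg (S : IsDelaySolution χ σ) (R : IsRegularGrowth h n) (hζ : 0 < ζ)
    (hnζ : 0 < n → ζ = exp 1 / n)
    (hχ : ∀ δ, 0 < δ → ∀ᶠ t in atTop, χ t ≤ exp (-(t * (log (h t) - δ)))) {δ : ℝ} (hδ : 0 < δ) :
    ∀ᶠ u in atTop, σ u ≤ exp (-(u * (log (h (ζ * log u)) - δ))) := by
  have hδ4 : 0 < δ / 4 := by positivity
  have hev := S.eventually_le_exp_neg_of_kernel_le R hζ hnζ hδ4 (hχ _ hδ4)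
  filter_upwards [Real.tendsto_log_atTop.eventually hev, eventually_gt_atTop 0] with u hu hu0
  rwa [exp_log hu0, mul_div_cancel₀ δ four_ne_zero] at hu

end IsDelaySolution

theorem tendsto_rpow_one_div_mul_of_eventuallyEq {χ e h : ℝ → ℝ} (he : Tendsto e atTop (𝓝 0))
    (hpos : ∀ᶠ t in atTop, 0 < h t) (hχ : ∀ᶠ t in atTop, χ t = ((1 + e t) / h t) ^ t) :
    Tendsto (fun t => χ t ^ (1 / t) * h t) atTop (𝓝 1) := by
  have hone : Tendsto (fun t => 1 + e t) atTop (𝓝 1) := by simpa using he.const_add 1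
  refine hone.congr' ?_
  filter_upwards [hpos, hχ, hone.eventually_const_lt one_pos, eventually_ne_atTop 0]
    with t hht hχt het ht
  rw [hχt, ← rpow_mul (by positivity), mul_one_div_cancel ht, rpow_one, div_mul_cancel₀ _ hht.ne']

theorem statement8_general {χ σ h : ℝ → ℝ} {n ζ : ℝ} (S : IsDelaySolution χ σ)
    (R : IsRegularGrowth h n) (hχ : Tendsto (fun t => χ t ^ (1 / t) * h t) atTop (𝓝 1))
    (hζ : 0 < ζ) (hnζ : 0 < n → ζ = exp 1 / n) :
    Tendsto (fun u => σ u ^ (1 / u) * h (ζ * log u)) atTop (𝓝 1) := by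
  have hh_pos : ∀ᶠ t in atTop, 0 < h t := R.tendsto_atTop.eventually_gt_atTop 0
  have hh_comp_pos : ∀ᶠ u in atTop, 0 < h (ζ * log u) :=
    (Real.tendsto_log_atTop.const_mul_atTop hζ).eventually hh_pos
  have hχ_nonneg : ∀ᶠ t in atTop, 0 ≤ χ t :=
    (eventually_ge_atTop 0).mono fun _ ht => S.isDelayKernel.nonneg ht
  have hσ_nonneg : ∀ᶠ u in atTop, 0 ≤ σ u := (eventually_ge_atTop 0).mono fun _ hu => S.nonneg hu
  have hbounds := (tendsto_rpow_mul_nhds_one_iff hχ_nonneg hh_pos).1 hχ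
  refine (tendsto_rpow_mul_nhds_one_iff hσ_nonneg hh_comp_pos).2 fun δ hδ => ?_
  exact (S.eventually_exp_neg_le R hζ hnζ (fun d hd => (hbounds d hd).mono fun _ => And.left)
    hδ).and (S.eventually_le_exp_neg R hζ hnζ
      (fun d hd => (hbounds d hd).mono fun _ => And.right) hδ)

end

theorem statement8 (χ : ℝ → ℝ) (hmeas : Measurable χ)
    (hχ1 : ∀ t : ℝ, 0 ≤ t → t ≤ 1 → χ t = 1)
    (hχ2 : ∀ t : ℝ, 1 < t → 0 ≤ χ t ∧ χ t ≤ 1)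
    (e : ℝ → ℝ) (he : Filter.Tendsto e Filter.atTop (nhds 0))
    (h : ℝ → ℝ)
    (hpos : ∀ t : ℝ, 0 < t → 0 < h t)
    (hmono : MonotoneOn h (Set.Ioi 0))
    (htop : Filter.Tendsto h Filter.atTop Filter.atTop)
    (hdiff : ContDiffOn ℝ 1 h (Set.Ioi 0))
    (n : ℝ) (hn : 0 ≤ n)
    (hlim : Filter.Tendsto (fun u : ℝ => u * deriv h u / h u) Filter.atTop (nhds n))
    (hχh : ∀ t : ℝ, 1 ≤ t → χ t = ((1 + e t) / h t) ^ t)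
    (σ : ℝ → ℝ)
    (hσ1 : ∀ u : ℝ, 0 ≤ u → u ≤ 1 → σ u = 1)
    (hσeq : ∀ u : ℝ, 1 < u → u * σ u = ∫ t in (0 : ℝ)..u, σ (u - t) * χ t)
    (ζ : ℝ) (hζpos : 0 < n → ζ = Real.exp 1 / n) (hζzero : n = 0 → ζ = 1) :
    Filter.Tendsto (fun u : ℝ => (σ u) ^ (1 / u) * h (ζ * Real.log u))
      Filter.atTop (nhds 1) := by
  have S : IsDelaySolution χ σ := ⟨⟨hmeas, hχ1, hχ2⟩, hσ1, hσeq⟩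
  have hh_pos : ∀ᶠ t in Filter.atTop, 0 < h t := (Filter.eventually_gt_atTop 0).mono hpos
  have hh_diff : ∀ᶠ t in Filter.atTop, DifferentiableAt ℝ h t :=
    (Filter.eventually_gt_atTop 0).mono fun t ht =>
      (hdiff.differentiableOn one_ne_zero).differentiableAt (Ioi_mem_nhds ht)
  have R : IsRegularGrowth h n :=
    { monotoneOn := ⟨1, hmono.mono (Set.Ici_subset_Ioi.2 one_pos)⟩
      tendsto_atTop := htop
      tendsto_comp_mul_div := fun _ ha =>
        tendsto_comp_mul_div_of_tendsto_mul_deriv_div hh_pos hh_diff hlim ha }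
  have hχ := tendsto_rpow_one_div_mul_of_eventuallyEq he hh_pos
    ((Filter.eventually_ge_atTop 1).mono hχh)
  have hζ : 0 < ζ := by
    rcases hn.eq_or_lt with hn0 | hn0
    · exact hζzero hn0.symm ▸ one_pos
    · exact hζpos hn0 ▸ div_pos (Real.exp_pos 1) hn0
  exact statement8_general S R hχ hζ hζpos
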